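/- Let d ≥ 1 be an integer and C, m_Z > 0. Let Z be an ℝ^d random vector with a Lebesgue density p satisfying sup_{z ∈ ℝ^d} p(z) ≤ C, and with ‖Z‖ ≤ m_Z almost surely. Then there exists a constant C̃ > 0, depending only on d, C and m_Z, such that for every unit vector u ∈ ℝ^d, the random variable u'Z has a Lebesgue density on ℝ bounded above by C̃. -/

import Mathlib

open MeasureTheory Matrix

noncomputable section

/-- The Euclidean norm of a vector in `Fin d → ℝ`. -/
def eNorm {d : ℕ} (x : Fin d → ℝ) : ℝ := Real.sqrt (∑ i, x i ^ 2)

/-!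
Rotate so that `u` becomes a coordinate axis. Lebesgue measure is invariant, and the ball of radius
`m` lies in the cube `[-m, m]^d`, so the part of the slab `{x | ⟪u, x⟫ ∈ A}` inside the ball has
volume at most `(2m)^(d-1) |A|`. Multiplying by `C` bounds the law of `⟪u, Z⟫` by a multiple of
Lebesgue measure, which by Radon–Nikodym means that it has a bounded density.
-/

open Metric WithLp
open scoped NNReal ENNReal RealInnerProductSpace

theorem exists_measurable_le_eq_withDensity_of_le_smul {α : Type*} [MeasurableSpace α]
    {μ ν : Measure α} [SigmaFinite μ] {K : ℝ≥0} (h : ν ≤ K • μ) :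
    ∃ q : α → ℝ≥0, Measurable q ∧ (∀ x, q x ≤ K) ∧ ν = μ.withDensity (fun x ↦ (q x : ℝ≥0∞)) := by
  have : SigmaFinite ν := Measure.sigmaFinite_of_le _ h
  -- The derivative is at most `1` only almost everywhere, hence the truncation.
  let f : α → ℝ≥0 := fun x ↦ (min (ν.rnDeriv (K • μ) x) 1).toNNReal
  have coe_f (x : α) : (f x : ℝ≥0∞) = min (ν.rnDeriv (K • μ) x) 1 :=
    ENNReal.coe_toNNReal (min_lt_of_right_lt ENNReal.one_lt_top).ne
  refine ⟨fun x ↦ K * f x, by fun_prop, fun x ↦ mul_le_of_le_one_right' ?_, ?_⟩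
  · exact_mod_cast (coe_f x).trans_le (min_le_right _ _)
  calc ν = (K • μ).withDensity (ν.rnDeriv (K • μ)) :=
        (Measure.withDensity_rnDeriv_eq _ _ (Measure.absolutelyContinuous_of_le h)).symm
    _ = (K • μ).withDensity (fun x ↦ (f x : ℝ≥0∞)) := by
        refine withDensity_congr_ae ?_
        filter_upwards [Measure.rnDeriv_le_one_of_le h] with x hx
        rw [coe_f]
        exact (min_eq_left hx).symm
    _ = μ.withDensity (fun x ↦ ((K * f x : ℝ≥0) : ℝ≥0∞)) := by
        simp only [ENNReal.coe_mul]
        exact (withDensity_smul_measure _ _).trans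
          (withDensity_smul' _ _ ENNReal.coe_ne_top).symm

theorem pi_const_univ_pi_update_const {ι α : Type*} [Fintype ι] [DecidableEq ι]
    [MeasurableSpace α] (μ : Measure α) [SigmaFinite μ] (i : ι) (s t : Set α) :
    Measure.pi (fun _ ↦ μ) (Set.univ.pi (Function.update (fun _ : ι ↦ s) i t)) =
      μ s ^ (Fintype.card ι - 1) * μ t := by
  rw [Measure.pi_pi, ← Finset.prod_erase_mul _ _ (Finset.mem_univ i), Function.update_self]
  congr 1
  calc ∏ j ∈ Finset.univ.erase i, μ (Function.update (fun _ ↦ s) i t j)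
      = ∏ _j ∈ Finset.univ.erase i, μ s :=
        Finset.prod_congr rfl fun _ hj ↦ by rw [Function.update_of_ne (Finset.ne_of_mem_erase hj)]
    _ = μ s ^ (Fintype.card ι - 1) := by
        rw [Finset.prod_const, Finset.card_erase_of_mem (Finset.mem_univ i), Finset.card_univ]

section InnerProductSpace

variable {E : Type*} [NormedAddCommGroup E] [InnerProductSpace ℝ E] [FiniteDimensional ℝ E]
  {u : E} {r : ℝ}

theorem exists_orthonormalBasis_apply_eq (hu : ‖u‖ = 1) :
    ∃ (s : Finset E) (b : OrthonormalBasis s ℝ E) (i : s), b i = u := by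
  have hu' : Orthonormal ℝ ((↑) : ({u} : Set E) → E) := by simp [hu]
  obtain ⟨s, b, hs, hb⟩ := hu'.exists_orthonormalBasis_extension
  exact ⟨s, b, ⟨u, hs rfl⟩, by rw [hb]⟩

variable [MeasurableSpace E] [BorelSpace E]

theorem volume_inner_preimage_inter_closedBall_le (hu : ‖u‖ = 1) (A : Set ℝ) :
    volume ((⟪u, ·⟫) ⁻¹' A ∩ closedBall 0 r) ≤
      ENNReal.ofReal (2 * r) ^ (Module.finrank ℝ E - 1) * volume A := by
  classical
  obtain ⟨s, b, i, rfl⟩ := exists_orthonormalBasis_apply_eq hu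
  let box : Set (s → ℝ) := Set.univ.pi (Function.update (fun _ ↦ Set.Icc (-r) r) i A)
  let coords : E ≃ᵐ (s → ℝ) := b.measurableEquiv.trans (MeasurableEquiv.toLp 2 (s → ℝ)).symm
  have coords_preserving : MeasurePreserving coords :=
    (PiLp.volume_preserving_ofLp s).comp b.measurePreserving_measurableEquiv
  have coords_apply (x : E) (j : s) : coords x j = ⟪b j, x⟫ := b.repr_apply_apply x j
  have subset_box : (⟪b i, ·⟫) ⁻¹' A ∩ closedBall 0 r ⊆ coords ⁻¹' box := by
    rintro x ⟨hxA, hxr⟩ j -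
    rw [coords_apply]
    obtain rfl | hj := eq_or_ne j i
    · rwa [Function.update_self]
    · rw [Function.update_of_ne hj, Set.mem_Icc, ← abs_le]
      calc |⟪b j, x⟫| ≤ ‖b j‖ * ‖x‖ := abs_real_inner_le_norm _ _
        _ = ‖x‖ := by rw [b.norm_eq_one, one_mul]
        _ ≤ r := mem_closedBall_zero_iff.mp hxr
  calc volume ((⟪b i, ·⟫) ⁻¹' A ∩ closedBall 0 r)
      ≤ volume (coords ⁻¹' box) := measure_mono subset_box
    _ = volume box := coords_preserving.measure_preimage_equiv box
    _ = ENNReal.ofReal (2 * r) ^ (Module.finrank ℝ E - 1) * volume A := by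
        rw [volume_pi, pi_const_univ_pi_update_const, Real.volume_Icc, sub_neg_eq_add, two_mul,
          Module.finrank_eq_card_basis b.toBasis]

theorem map_inner_le_smul_volume {ν : Measure E} {c : ℝ≥0∞} (hν : ν ≤ c • volume)
    (hr : ∀ᵐ x ∂ν, ‖x‖ ≤ r) (hu : ‖u‖ = 1) :
    ν.map (⟪u, ·⟫) ≤ (c * ENNReal.ofReal (2 * r) ^ (Module.finrank ℝ E - 1)) • volume := by
  refine Measure.le_iff.mpr fun A hA ↦ ?_
  calc ν.map (⟪u, ·⟫) A
      = ν ((⟪u, ·⟫) ⁻¹' A) := Measure.map_apply (by fun_prop) hA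
    _ ≤ ν ((⟪u, ·⟫) ⁻¹' A ∩ closedBall 0 r) := by
        refine measure_mono_ae ?_
        filter_upwards [hr] with x hx hxA
        exact ⟨hxA, mem_closedBall_zero_iff.mpr hx⟩
    _ ≤ c * volume ((⟪u, ·⟫) ⁻¹' A ∩ closedBall 0 r) := hν _
    _ ≤ c * (ENNReal.ofReal (2 * r) ^ (Module.finrank ℝ E - 1) * volume A) := by
        gcongr
        exact volume_inner_preimage_inter_closedBall_le hu A
    _ = _ := (mul_assoc _ _ _).symm

end InnerProductSpace

section Coordinates

variable {d : ℕ} {u : Fin d → ℝ}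

theorem eNorm_eq_norm_toLp (x : Fin d → ℝ) : eNorm x = ‖toLp 2 x‖ := by
  simp only [eNorm, EuclideanSpace.norm_eq, Real.norm_eq_abs, sq_abs]

theorem map_dotProduct_le_smul_volume {r : ℝ} {ν : Measure (Fin d → ℝ)} {c : ℝ≥0∞}
    (hν : ν ≤ c • volume) (hr : ∀ᵐ x ∂ν, eNorm x ≤ r) (hu : eNorm u = 1) :
    ν.map (u ⬝ᵥ ·) ≤ (c * ENNReal.ofReal (2 * r) ^ (d - 1)) • volume := by
  have toLp_preserving := PiLp.volume_preserving_toLp (Fin d)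
  have map_toLp_le : ν.map (toLp 2) ≤ c • volume := by
    rw [← toLp_preserving.map_eq, ← Measure.map_smul]
    exact Measure.map_mono hν toLp_preserving.measurable
  have norm_le : ∀ᵐ x ∂ν.map (toLp 2), ‖x‖ ≤ r := by
    have measurableSet_norm_le : MeasurableSet {x : EuclideanSpace ℝ (Fin d) | ‖x‖ ≤ r} :=
      measurableSet_le measurable_norm measurable_const
    refine (ae_map_iff toLp_preserving.measurable.aemeasurable measurableSet_norm_le).mpr ?_
    simpa only [eNorm_eq_norm_toLp] using hr
  have inner_comp_toLp : (⟪toLp 2 u, ·⟫) ∘ toLp 2 = (u ⬝ᵥ ·) := by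
    ext x
    simp [EuclideanSpace.inner_toLp_toLp, dotProduct_comm]
  have map_inner_le :=
    map_inner_le_smul_volume map_toLp_le norm_le ((eNorm_eq_norm_toLp u).symm.trans hu)
  rwa [Measure.map_map (by fun_prop) toLp_preserving.measurable, inner_comp_toLp,
    finrank_euclideanSpace_fin] at map_inner_le

theorem stmt_13_general {C m : ℝ} (hC : 0 ≤ C) (hm : 0 ≤ m)
    {Ω : Type*} [MeasurableSpace Ω] {μ : Measure Ω} {Z : Ω → Fin d → ℝ} (hZ : AEMeasurable Z μ)
    {p : (Fin d → ℝ) → ℝ} (hp : μ.map Z = volume.withDensity (fun x ↦ ENNReal.ofReal (p x)))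
    (hpC : ∀ᵐ x, p x ≤ C) (hb : ∀ᵐ ω ∂μ, eNorm (Z ω) ≤ m) (hu : eNorm u = 1) :
    ∃ q : ℝ → ℝ, Measurable q ∧ (∀ τ, 0 ≤ q τ) ∧ (∀ τ, q τ ≤ C * (2 * m) ^ (d - 1)) ∧
      μ.map (fun ω ↦ u ⬝ᵥ Z ω) = volume.withDensity (fun τ ↦ ENNReal.ofReal (q τ)) := by
  have law_le : μ.map Z ≤ ENNReal.ofReal C • volume := by
    rw [hp, ← withDensity_const]
    exact withDensity_mono (hpC.mono fun x ↦ ENNReal.ofReal_le_ofReal)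
  have law_bounded : ∀ᵐ x ∂μ.map Z, eNorm x ≤ m := by
    refine (ae_map_iff hZ (measurableSet_le ?_ measurable_const)).mpr hb
    unfold eNorm
    fun_prop
  have map_law : (μ.map Z).map (u ⬝ᵥ ·) = μ.map (fun ω ↦ u ⬝ᵥ Z ω) :=
    AEMeasurable.map_map_of_aemeasurable
      (continuous_const.dotProduct continuous_id).measurable.aemeasurable hZ
  have map_le : μ.map (fun ω ↦ u ⬝ᵥ Z ω) ≤ ENNReal.ofReal (C * (2 * m) ^ (d - 1)) • volume := by
    rw [← map_law, ENNReal.ofReal_mul hC, ENNReal.ofReal_pow (by positivity)]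
    exact map_dotProduct_le_smul_volume law_le law_bounded hu
  obtain ⟨q, hq_meas, hq_le, hq⟩ := exists_measurable_le_eq_withDensity_of_le_smul map_le
  refine ⟨fun τ ↦ q τ, hq_meas.coe_nnreal_real, fun τ ↦ (q τ).coe_nonneg, fun τ ↦ ?_, ?_⟩
  · exact (Real.le_toNNReal_iff_coe_le (by positivity)).mp (hq_le τ)
  · simpa only [ENNReal.ofReal_coe_nnreal] using hq

end Coordinates

/-- If `Z ∈ ℝ^d` has a Lebesgue density bounded by `C` and `‖Z‖ ≤ m_Z` a.s.,
then there is `C̃ > 0`, depending only on `d, C, m_Z`, such that for every unit vector `u`,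
`u'Z` has a Lebesgue density on `ℝ` bounded by `C̃`. -/
theorem stmt_13 (d : ℕ) (hd : 1 ≤ d) (C mZ : ℝ) (hC : 0 < C) (hmZ : 0 < mZ) :
    ∃ Ctilde : ℝ, 0 < Ctilde ∧
      ∀ (Ω : Type) (_ : MeasurableSpace Ω) (μ : Measure Ω), IsProbabilityMeasure μ →
      ∀ (Z : Ω → Fin d → ℝ), Measurable Z →
      ∀ p : (Fin d → ℝ) → ℝ,
        (∀ x, 0 ≤ p x) →
        μ.map Z = MeasureTheory.volume.withDensity (fun x => ENNReal.ofReal (p x)) →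
        (∀ x, p x ≤ C) →
        (∀ᵐ ω ∂μ, eNorm (Z ω) ≤ mZ) →
        ∀ u : Fin d → ℝ, eNorm u = 1 →
          ∃ q : ℝ → ℝ, (∀ τ, 0 ≤ q τ) ∧ (∀ τ, q τ ≤ Ctilde) ∧
            μ.map (fun ω => u ⬝ᵥ Z ω)
              = MeasureTheory.volume.withDensity (fun τ => ENNReal.ofReal (q τ)) := by
  refine ⟨C * (2 * mZ) ^ (d - 1), by positivity, fun Ω _ μ _ Z hZ p _ hp hpC hb u hu ↦ ?_⟩
  exact (stmt_13_general hC.le hmZ.le hZ.aemeasurable hp (.of_forall hpC) hb hu).imp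
    fun _ ↦ And.right
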